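/- arXiv:1501.07122 — 2 statements merged into one kernel-verified Lean document; each statement's English description precedes it below -/
import Mathlib

section
/- Let φ : ℝ × ℝⁿ → ℝⁿ be a continuous flow that is σ-reversible for an involution σ, let z* be a σ-fixed point with φ(T, z*) = z* for some T > 0, and let α : ℝⁿ → ℝ be a continuous σ-compatible function with α(φ(t,z*)) > 0 for all t. Then ∫₀ᵀ (1/α(φ(t, z*)) − 1) dt = 0; equivalently, ∫₀ᵀ 1/α(φ(t, z*)) dt = T. -/
/-!
On the periodic orbit of a fixed point of `σ`, time reversal about `T / 2` is the action of `σ`.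
Compatibility says that `1 / α - 1` changes sign under `σ`, so along the orbit this function is odd
about `T / 2`, and its integral over a period vanishes.
-/

/-- Reversibility of the time-indexed family of maps `φ` under `σ`, which turns motion for time `t`
into motion for time `-t`. The flow law and `σ ∘ σ = id` are separate properties. -/
def IsReversible {G X : Type*} [Neg G] (φ : G → X → X) (σ : X → X) : Prop :=
  ∀ t, Function.Semiconj σ (φ t) (φ (-t))

/-- `σ`-compatibility of the function `α`. Away from the zeros of `α` it amounts to
`1 / α + 1 / (α ∘ σ) = 2`, written here without division. -/
def IsCompatible {X K : Type*} [Semiring K] (α : X → K) (σ : X → X) : Prop :=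
  ∀ z, α z + α (σ z) = 2 * α z * α (σ z)

theorem IsReversible.apply_neg_add_of_isFixedPt {G X : Type*} [AddGroup G]
    {φ : G → X → X} {σ : X → X} (hφ : IsReversible φ σ)
    (hadd : ∀ s t z, φ (s + t) z = φ s (φ t z)) {z : X} (hσ : Function.IsFixedPt σ z)
    {T : G} (hT : Function.IsFixedPt (φ T) z) (t : G) :
    φ (-t + T) z = σ (φ t z) := by
  rw [hadd, hT, hφ t z, hσ]

namespace IsCompatible

variable {X K : Type*} {α : X → K} {σ : X → X} {z : X}

theorem apply_map_ne_zero [Semiring K] (hα : IsCompatible α σ) (hz : α z ≠ 0) :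
    α (σ z) ≠ 0 := by
  intro hσz
  have h := hα z
  rw [hσz, add_zero, mul_zero] at h
  exact hz h

theorem one_div_map_sub_one [Field K] (hα : IsCompatible α σ) (hz : α z ≠ 0) :
    1 / α (σ z) - 1 = -(1 / α z - 1) := by
  have hσz : α (σ z) ≠ 0 := hα.apply_map_ne_zero hz
  have hsum : 1 / α z + 1 / α (σ z) = 2 := by
    rw [one_div_add_one_div hz hσz, hα z, mul_assoc, mul_div_cancel_right₀ _ (mul_ne_zero hz hσz)]
  linear_combination hsum

end IsCompatible

theorem intervalIntegral_eq_zero_of_comp_add_sub_eq_neg {E : Type*} [NormedAddCommGroup E]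
    [NormedSpace ℝ E] {f : ℝ → E} {a b : ℝ} (hf : ∀ t, f (a + b - t) = -f t) :
    ∫ t in a..b, f t = 0 := by
  have hreflect : -∫ t in a..b, f t = ∫ t in a..b, f t := by
    calc -∫ t in a..b, f t = ∫ t in a..b, f (a + b - t) := by
          simp only [hf, intervalIntegral.integral_neg]
      _ = ∫ t in a..b, f t := by
          rw [intervalIntegral.integral_comp_sub_left, add_sub_cancel_right, add_sub_cancel_left]
  have : IsAddTorsionFree E := .of_isTorsionFree ℝ E
  exact self_eq_neg.mp hreflect.symm

theorem reversible_flow_integral_compat_general {X : Type*} {φ : ℝ → X → X} {σ : X → X}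
    (hφ : IsReversible φ σ) (hadd : ∀ s t z, φ (s + t) z = φ s (φ t z))
    {z : X} (hσ : Function.IsFixedPt σ z) {T : ℝ} (hT : Function.IsFixedPt (φ T) z)
    {α : X → ℝ} (hα : IsCompatible α σ) (hne : ∀ t, α (φ t z) ≠ 0)
    (hint : IntervalIntegrable (fun t ↦ 1 / α (φ t z)) MeasureTheory.volume 0 T) :
    (∫ t in (0 : ℝ)..T, (1 / α (φ t z) - 1)) = 0 ∧ (∫ t in (0 : ℝ)..T, 1 / α (φ t z)) = T := by
  have hodd : ∀ t, 1 / α (φ (0 + T - t) z) - 1 = -(1 / α (φ t z) - 1) := fun t ↦ by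
    rw [zero_add, ← neg_add_eq_sub t T, hφ.apply_neg_add_of_isFixedPt hadd hσ hT,
      hα.one_div_map_sub_one (hne t)]
  have hzero : (∫ t in (0 : ℝ)..T, (1 / α (φ t z) - 1)) = 0 :=
    intervalIntegral_eq_zero_of_comp_add_sub_eq_neg hodd
  refine ⟨hzero, ?_⟩
  rwa [intervalIntegral.integral_sub hint intervalIntegrable_const, integral_one, sub_zero,
    sub_eq_zero] at hzero

open intervalIntegral in
theorem reversible_flow_integral_compat
    {n : ℕ} (φ : ℝ → (Fin n → ℝ) → (Fin n → ℝ)) (σ : (Fin n → ℝ) → (Fin n → ℝ))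
    (hφcont : Continuous (fun p : ℝ × (Fin n → ℝ) => φ p.1 p.2))
    (hφ0 : ∀ z, φ 0 z = z)
    (hφadd : ∀ s t z, φ (s + t) z = φ s (φ t z))
    (hinv : ∀ z, σ (σ z) = z)
    (hrev : ∀ t z, σ (φ t z) = φ (-t) (σ z))
    (zstar : Fin n → ℝ) (hfix : σ zstar = zstar)
    (T : ℝ) (hT : 0 < T) (hper : φ T zstar = zstar)
    (α : (Fin n → ℝ) → ℝ) (hαcont : Continuous α)
    (hcompat : ∀ z, α z + α (σ z) = 2 * α z * α (σ z))
    (hpos : ∀ t : ℝ, 0 < α (φ t zstar)) :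
    (∫ t in (0:ℝ)..T, (1 / α (φ t zstar) - 1)) = 0 ∧
    (∫ t in (0:ℝ)..T, 1 / α (φ t zstar)) = T := by
  have hcont : Continuous fun t ↦ 1 / α (φ t zstar) :=
    continuous_const.div (hαcont.comp (hφcont.comp (.prodMk_left zstar))) fun t ↦ (hpos t).ne'
  exact reversible_flow_integral_compat_general hrev hφadd hfix hper hcompat
    (fun t ↦ (hpos t).ne') (hcont.intervalIntegrable 0 T)
end

section
/- Let φ : ℝ × ℝⁿ → ℝⁿ be a continuous flow that is σ-symmetric for an involution σ, let z* be a point with φ(T, z*) = z* for some T > 0 satisfying σ(z*) = φ(T/2, z*), and let δ : ℝⁿ → ℝ be a continuous σ-odd function with δ(z) > −1 for all z. Then ∫₀ᵀ (1 + δ(φ(t, z*))) dt = T. -/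
/-!
Since `σ z = φ (T / 2) z`, following the orbit of `z` for half a period amounts to applying `σ`,
which negates `δ`. Thus `δ` is antiperiodic along the orbit with antiperiod `T / 2`, hence
`T`-periodic. Shifting `[0, T]` by `T / 2` preserves the integral of `δ` by periodicity but negates
it by antiperiodicity, so it vanishes and only the constant `1` contributes.
-/

open Function MeasureTheory

theorem antiperiodic_comp_orbit_of_odd {G X Y : Type*} [Add G] [Neg Y] {φ : G → X → X} {σ : X → X}
    {δ : X → Y} {c : G} {z : X} (hadd : ∀ s t z, φ (s + t) z = φ s (φ t z))
    (hcomm : ∀ t, Function.Commute σ (φ t)) (hodd : ∀ z, δ (σ z) = -δ z) (hz : σ z = φ c z) :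
    Antiperiodic (fun t ↦ δ (φ t z)) c := fun t ↦
  calc
    δ (φ (t + c) z) = δ (φ t (σ z)) := by rw [hadd, hz]
    _ = δ (σ (φ t z)) := by rw [hcomm t z]
    _ = -δ (φ t z) := hodd _

theorem intervalIntegral_eq_zero_of_antiperiodic {E : Type*} [NormedAddCommGroup E]
    [NormedSpace ℝ E] {f : ℝ → E} {c : ℝ} (hf : Antiperiodic f c) (a : ℝ) :
    ∫ x in a..a + 2 * c, f x = 0 := by
  have : IsAddTorsionFree E := .of_isTorsionFree ℝ E
  refine self_eq_neg.mp ?_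
  calc
    ∫ x in a..a + 2 * c, f x = ∫ x in (a + c)..(a + c) + 2 * c, f x :=
      hf.periodic_two_mul.intervalIntegral_add_eq a (a + c)
    _ = ∫ x in a..a + 2 * c, f (x + c) := by
      rw [intervalIntegral.integral_comp_add_right, add_right_comm]
    _ = -∫ x in a..a + 2 * c, f x := by
      simp only [hf _, intervalIntegral.integral_neg]

theorem symmetric_flow_integral_odd_general {X : Type*} {φ : ℝ → X → X} {σ : X → X} {δ : X → ℝ}
    {T : ℝ} {z : X} (hadd : ∀ s t z, φ (s + t) z = φ s (φ t z))
    (hcomm : ∀ t, Function.Commute σ (φ t)) (hhalf : σ z = φ (T / 2) z)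
    (hodd : ∀ z, δ (σ z) = -δ z)
    (hint : IntervalIntegrable (fun t ↦ δ (φ t z)) volume 0 T) :
    ∫ t in (0 : ℝ)..T, (1 + δ (φ t z)) = T := by
  have hanti : Antiperiodic (fun t ↦ δ (φ t z)) (T / 2) :=
    antiperiodic_comp_orbit_of_odd hadd hcomm hodd hhalf
  have hzero : ∫ t in (0 : ℝ)..T, δ (φ t z) = 0 := by
    simpa [mul_div_cancel₀] using intervalIntegral_eq_zero_of_antiperiodic hanti 0
  calc
    ∫ t in (0 : ℝ)..T, (1 + δ (φ t z))
    _ = (∫ _ in (0 : ℝ)..T, (1 : ℝ)) + ∫ t in (0 : ℝ)..T, δ (φ t z) :=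
      intervalIntegral.integral_add intervalIntegrable_const hint
    _ = T := by rw [hzero, add_zero, integral_one, sub_zero]

theorem symmetric_flow_integral_odd
    {n : ℕ} (φ : ℝ → (Fin n → ℝ) → (Fin n → ℝ)) (σ : (Fin n → ℝ) → (Fin n → ℝ))
    (hφcont : Continuous (fun p : ℝ × (Fin n → ℝ) => φ p.1 p.2))
    (hφ0 : ∀ z, φ 0 z = z)
    (hφadd : ∀ s t z, φ (s + t) z = φ s (φ t z))
    (hinv : ∀ z, σ (σ z) = z)
    (hsym : ∀ t z, σ (φ t z) = φ t (σ z))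
    (zstar : Fin n → ℝ) (T : ℝ) (hT : 0 < T)
    (hper : φ T zstar = zstar)
    (hhalf : σ zstar = φ (T / 2) zstar)
    (δ : (Fin n → ℝ) → ℝ) (hδcont : Continuous δ)
    (hodd : ∀ z, δ (σ z) = - δ z)
    (hgt : ∀ z, -1 < δ z) :
    (∫ t in (0:ℝ)..T, (1 + δ (φ t zstar))) = T :=
  symmetric_flow_integral_odd_general hφadd hsym hhalf hodd <|
    (hδcont.comp (hφcont.comp (.prodMk_left zstar))).intervalIntegrable 0 T
end
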